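/- In the Cantor tower over F_p with p odd, for every i ≥ 0 the element x_i generates U_i over F_p; that is, F_p(x_i) = U_i = F_p(x_0, …, x_i), and in particular [F_p(x_i) : F_p] = p^i · d. -/

import Mathlib

open IntermediateField

/-!
An element of an extension of a finite field `K` has degree equal to its period under Frobenius, and
trace equal to the sum of its Frobenius orbit. If `φ` is the Frobenius of `F_p` and
`y ^ p - y = g`, then `φ ^ n y = y + Tr g` for `n` the period of `g`; hence `Tr g ≠ 0` makes the
period of `y` equal to `p * n`, and the conjugates of `y` over `F_p(g)` are the `y + a`, `a ∈ F_p`.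
For odd `p` the sum of their `(2 * p - 1)`-st powers is `y - y ^ p = -g`. This relative trace of
`y ^ (2 * p - 1)` being a nonzero generator of `F_p(g)`, the element `y ^ (2 * p - 1)` again has
period `p * n`, and by transitivity its absolute trace is `-Tr g ≠ 0`, so that the argument can be
repeated with `y ^ (2 * p - 1)` in place of `g`. Equality of degrees then forces
`F_p(γ_i) = F_p(x_i)`, and `γ_i = x_{i+1} ^ p - x_{i+1}` puts `x_i` into `F_p(x_{i+1})`.
-/

open Function FiniteField

section OrbitSum

section AddCommMonoid

variable {A : Type*} [AddCommMonoid A]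

theorem birkhoffSum_mul {α : Type*} (f : α → α) (g : α → A) (m n : ℕ) (x : α) :
    birkhoffSum f g (m * n) x = birkhoffSum f (birkhoffSum f^[m] g n) m x := by
  induction n with
  | zero => simp [birkhoffSum]
  | succ n ih =>
    have hcomm (k : ℕ) : (f^[m])^[n] (f^[k] x) = f^[k] (f^[m * n] x) := by
      rw [← iterate_mul, ← iterate_add_apply, add_comm, iterate_add_apply]
    rw [Nat.mul_succ, birkhoffSum_add, ih]
    simp only [birkhoffSum, Finset.sum_range_succ, Finset.sum_add_distrib, hcomm]

/-- The sum of the points of the orbit of a periodic point `a` of `f`, with value `0` at points that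
are not periodic. For the Frobenius of an extension of a finite field `K` it is the trace of `a`
from `K(a)` to `K`. -/
noncomputable def orbitSum (f : A → A) (a : A) : A :=
  birkhoffSum f id (minimalPeriod f a) a

variable {F : Type*} [FunLike F A A] [AddMonoidHomClass F A A]

theorem iterate_map_birkhoffSum {α : Type*} (f : F) (g : α → α) (h : α → A) (m n : ℕ) (x : α) :
    f^[m] (birkhoffSum g h n x) = birkhoffSum g (f^[m] ∘ h) n x := by
  induction m with
  | zero => rfl
  | succ m ih => rw [iterate_succ_apply', ih, map_birkhoffSum, iterate_succ', comp_assoc]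

theorem iterate_birkhoffSum_iterate (f : F) (m n k : ℕ) (b : A) :
    f^[m] (birkhoffSum f^[n] id k b) = birkhoffSum f^[n] id k (f^[m] b) := by
  rw [iterate_map_birkhoffSum]
  refine Finset.sum_congr rfl fun j _ => ?_
  exact ((Function.Commute.iterate_iterate_self f n m).iterate_left j).symm.eq b

variable {f : F} {a b : A}

theorem minimalPeriod_eq_mul_prime {p : ℕ} (hp : p.Prime) (hpb : p • b = 0) (ha : a ≠ 0)
    (hb : IsPeriodicPt f (minimalPeriod f a * p) b)
    (hba : birkhoffSum f^[minimalPeriod f a] id p b = a) :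
    minimalPeriod f b = minimalPeriod f a * p := by
  have hper : IsPeriodicPt f (minimalPeriod f b) a := by
    rw [IsPeriodicPt, IsFixedPt, ← hba, iterate_birkhoffSum_iterate, iterate_minimalPeriod]
  have hne : minimalPeriod f b ≠ minimalPeriod f a := by
    intro heq
    have hfix : IsFixedPt f^[minimalPeriod f a] b := heq ▸ isPeriodicPt_minimalPeriod f b
    rw [hfix.birkhoffSum_eq, id, hpb] at hba
    exact ha hba.symm
  obtain ⟨k, hk⟩ := hper.minimalPeriod_dvd
  have hdvd := hb.minimalPeriod_dvd
  rw [hk] at hdvd hne ⊢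
  have hpos : 0 < minimalPeriod f a := Nat.pos_of_ne_zero fun h0 => hne (by simp [h0])
  rcases (Nat.dvd_prime hp).1 (Nat.dvd_of_mul_dvd_mul_left hpos hdvd) with rfl | rfl
  · simp at hne
  · rfl

theorem orbitSum_eq_of_birkhoffSum_iterate {k : ℕ}
    (hmin : minimalPeriod f b = minimalPeriod f a * k)
    (hba : birkhoffSum f^[minimalPeriod f a] id k b = a) : orbitSum f b = orbitSum f a := by
  rw [orbitSum, hmin, birkhoffSum_mul, orbitSum]
  refine Finset.sum_congr rfl fun n _ => ?_
  rw [← iterate_birkhoffSum_iterate, hba, id]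

end AddCommMonoid

section AddCommGroup

variable {A : Type*} [AddCommGroup A]
variable {F : Type*} [FunLike F A A] [AddMonoidHomClass F A A] (f : F) {a b : A}

theorem minimalPeriod_neg (a : A) : minimalPeriod f (-a) = minimalPeriod f a := by
  simp [minimalPeriod_eq_minimalPeriod_iff, IsPeriodicPt, IsFixedPt, iterate_map_neg]

theorem orbitSum_neg (a : A) : orbitSum f (-a) = -orbitSum f a := by
  simp [orbitSum, minimalPeriod_neg, birkhoffSum, iterate_map_neg]

theorem isFixedPt_orbitSum (a : A) : IsFixedPt f (orbitSum f a) := by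
  rw [IsFixedPt, ← sub_eq_zero]
  calc f (orbitSum f a) - orbitSum f a
      = birkhoffSum f id (minimalPeriod f a) (f a) - birkhoffSum f id (minimalPeriod f a) a := by
        simp [orbitSum, birkhoffSum, ← iterate_succ_apply' f, iterate_succ_apply]
    _ = 0 := by rw [birkhoffSum_apply_sub_birkhoffSum, iterate_minimalPeriod, sub_self]

variable {f}

theorem iterate_eq_add_birkhoffSum (h : f b - b = a) (n : ℕ) :
    f^[n] b = b + birkhoffSum f id n a := by
  induction n with
  | zero => simp
  | succ n ih =>
    rw [iterate_succ_apply, eq_add_of_sub_eq' h, iterate_map_add, ih, birkhoffSum_succ,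
      id, add_assoc]

theorem iterate_minimalPeriod_mul_eq_add_nsmul (h : f b - b = a) (j : ℕ) :
    f^[minimalPeriod f a * j] b = b + j • orbitSum f a := by
  induction j with
  | zero => simp
  | succ j ih =>
    rw [Nat.mul_succ, iterate_add_apply, iterate_eq_add_birkhoffSum h, iterate_map_add, ih,
      ← orbitSum, ((isFixedPt_orbitSum f a).iterate _).eq, succ_nsmul, add_assoc]

theorem minimalPeriod_eq_mul_addOrderOf (h : f b - b = a) :
    minimalPeriod f b = minimalPeriod f a * addOrderOf (orbitSum f a) := by
  apply dvd_antisymm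
  · apply IsPeriodicPt.minimalPeriod_dvd
    rw [IsPeriodicPt, IsFixedPt, iterate_minimalPeriod_mul_eq_add_nsmul h,
      addOrderOf_nsmul_eq_zero, add_zero]
  · have hper : IsPeriodicPt f (minimalPeriod f b) a := by
      rw [IsPeriodicPt, IsFixedPt, ← h, iterate_map_sub, ← iterate_succ_apply, iterate_succ_apply',
        iterate_minimalPeriod]
    obtain ⟨j, hj⟩ := hper.minimalPeriod_dvd
    rw [hj]
    apply mul_dvd_mul_left
    have hb := iterate_minimalPeriod_mul_eq_add_nsmul h j
    rw [← hj, iterate_minimalPeriod, left_eq_add] at hb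
    exact addOrderOf_dvd_of_nsmul_eq_zero hb

end AddCommGroup

end OrbitSum

section Frobenius

theorem finrank_adjoin_simple_eq_zero {K L : Type*} [Field K] [Field L] [Algebra K L] {z : L}
    (hz : ¬IsIntegral K z) : Module.finrank K K⟮z⟯ = 0 :=
  Module.finrank_of_not_finite fun _ =>
    hz ((AdjoinSimple.isIntegral_gen K z).1 (IsIntegral.of_finite K _))

variable (K : Type*) [Field K] [Fintype K] {L : Type*} [Field L] [Algebra K L]

theorem isPeriodicPt_frobeniusAlgHom_iff (n : ℕ) (z : L) :
    IsPeriodicPt (frobeniusAlgHom K L) n z ↔ z ^ Fintype.card K ^ n = z := by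
  rw [IsPeriodicPt, IsFixedPt, coe_frobeniusAlgHom, pow_iterate]

open Polynomial in
theorem isIntegral_of_isPeriodicPt_frobeniusAlgHom {n : ℕ} (hn : 0 < n) {z : L}
    (hz : IsPeriodicPt (frobeniusAlgHom K L) n z) : IsIntegral K z := by
  rw [isPeriodicPt_frobeniusAlgHom_iff] at hz
  refine ⟨X ^ Fintype.card K ^ n - X, monic_X_pow_sub ?_, by simp [hz]⟩
  simpa only [degree_X, Nat.one_lt_cast] using Nat.one_lt_pow hn.ne' Fintype.one_lt_card

theorem isPeriodicPt_frobeniusAlgHom_iff_pow_eq_one (n : ℕ) (z : L) :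
    IsPeriodicPt (frobeniusAlgHom K L) n z ↔ frobeniusAlgHom K K⟮z⟯ ^ n = 1 := by
  have hgen : (frobeniusAlgHom K K⟮z⟯ ^ n) (AdjoinSimple.gen K z) = AdjoinSimple.gen K z ↔
      IsPeriodicPt (frobeniusAlgHom K L) n z := by
    rw [isPeriodicPt_frobeniusAlgHom_iff, AlgHom.coe_pow, coe_frobeniusAlgHom, pow_iterate,
      Subtype.ext_iff]
    simp
  refine hgen.symm.trans ⟨fun h => algHom_ext_of_eq_adjoin K rfl ?_, fun h => by simp [h]⟩
  rintro _ rfl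
  exact h

theorem minimalPeriod_frobeniusAlgHom (z : L) :
    minimalPeriod (frobeniusAlgHom K L) z = Module.finrank K K⟮z⟯ := by
  by_cases hz : IsIntegral K z
  · have := adjoin.finiteDimensional hz
    have : Finite K⟮z⟯ := Module.finite_of_finite K
    rw [← orderOf_frobeniusAlgHom, ← Nat.dvd_right_iff_eq]
    intro n
    rw [← isPeriodicPt_iff_minimalPeriod_dvd, orderOf_dvd_iff_pow_eq_one,
      isPeriodicPt_frobeniusAlgHom_iff_pow_eq_one]
  · rw [finrank_adjoin_simple_eq_zero hz]
    refine minimalPeriod_eq_zero_of_notMem_periodicPts ?_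
    rintro ⟨n, hn, hper⟩
    exact hz (isIntegral_of_isPeriodicPt_frobeniusAlgHom K hn hper)

theorem mem_bot_of_isFixedPt_frobeniusAlgHom {z : L} (hz : IsFixedPt (frobeniusAlgHom K L) z) :
    z ∈ (⊥ : IntermediateField K L) := by
  rw [← finrank_adjoin_simple_eq_one_iff, ← minimalPeriod_frobeniusAlgHom]
  exact minimalPeriod_eq_one_iff_isFixedPt.2 hz

theorem algebraMap_trace_gen_eq_orbitSum (z : L) :
    algebraMap K L (Algebra.trace K K⟮z⟯ (AdjoinSimple.gen K z)) =
      orbitSum (frobeniusAlgHom K L) z := by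
  by_cases hz : IsIntegral K z
  · have := adjoin.finiteDimensional hz
    have : Finite K⟮z⟯ := Module.finite_of_finite K
    rw [IsScalarTower.algebraMap_apply K K⟮z⟯ L, algebraMap_trace_eq_sum_pow, orbitSum,
      minimalPeriod_frobeniusAlgHom, birkhoffSum]
    simp [coe_frobeniusAlgHom, pow_iterate]
  · rw [AdjoinSimple.trace_gen_eq_zero hz, map_zero, orbitSum, minimalPeriod_frobeniusAlgHom,
      finrank_adjoin_simple_eq_zero hz, birkhoffSum_zero]

theorem adjoin_simple_eq_of_minimalPeriod_eq {z w : L} (hz : IsIntegral K z) (hzw : z ∈ K⟮w⟯)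
    (h : minimalPeriod (frobeniusAlgHom K L) z = minimalPeriod (frobeniusAlgHom K L) w) :
    K⟮z⟯ = K⟮w⟯ := by
  rw [minimalPeriod_frobeniusAlgHom, minimalPeriod_frobeniusAlgHom] at h
  have := adjoin.finiteDimensional hz
  have : FiniteDimensional K K⟮w⟯ := Module.finite_of_finrank_pos (h ▸ Module.finrank_pos)
  exact eq_of_le_of_finrank_eq (adjoin_simple_le_iff.2 hzw) h

theorem isIntegral_of_orbitSum_ne_zero {z : L} (hz : orbitSum (frobeniusAlgHom K L) z ≠ 0) :
    IsIntegral K z := by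
  contrapose! hz
  rw [orbitSum, minimalPeriod_frobeniusAlgHom, finrank_adjoin_simple_eq_zero hz, birkhoffSum_zero]

end Frobenius

section PowerSums

variable (K : Type*) [Field K] [Fintype K]

theorem sum_pow_card_sub_one : ∑ a : K, a ^ (Fintype.card K - 1) = -1 := by
  classical
  have hpow (a : K) : a ^ (Fintype.card K - 1) = 1 - if a = 0 then 1 else 0 := by
    split_ifs with ha
    · rw [ha, zero_pow (Nat.sub_ne_zero_of_lt Fintype.one_lt_card), sub_self]
    · rw [FiniteField.pow_card_sub_one_eq_one a ha, sub_zero]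
  simp [hpow]

variable {R : Type*} [CommRing R] [Algebra K R]

theorem sum_add_algebraMap_pow_card_sub_one (y : R) :
    ∑ a : K, (y + algebraMap K R a) ^ (Fintype.card K - 1) = -1 := by
  simp_rw [add_pow, ← map_pow]
  rw [Finset.sum_comm]
  simp_rw [mul_right_comm _ (algebraMap K R _), ← Finset.mul_sum, ← map_sum]
  rw [Finset.sum_eq_single 0]
  · simp [sum_pow_card_sub_one]
  · intro k hk hk0
    have hlt : Fintype.card K - 1 - k < Fintype.card K - 1 := by grind
    rw [sum_pow_lt_card_sub_one K _ hlt, map_zero, mul_zero]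
  · simp

theorem sum_add_algebraMap_pow_two_mul_card_sub_one (hK : 2 < Fintype.card K) (y : R) :
    ∑ a : K, (y + algebraMap K R a) ^ (2 * Fintype.card K - 1) = y - y ^ Fintype.card K := by
  set q := Fintype.card K with hq
  have hfrob (a : K) : (y + algebraMap K R a) ^ q = y ^ q + algebraMap K R a := by
    simpa using map_add (frobeniusAlgHom K R) y (algebraMap K R a)
  have hsplit (a : K) : (y + algebraMap K R a) ^ (2 * q - 1) =
      (y ^ q - y) * (y + algebraMap K R a) ^ (q - 1) + y ^ q + algebraMap K R a := by
    calc (y + algebraMap K R a) ^ (2 * q - 1)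
        = (y + algebraMap K R a) ^ q * (y + algebraMap K R a) ^ (q - 1) := by
          rw [← pow_add]; congr 1; lia
      _ = (y ^ q - y) * (y + algebraMap K R a) ^ (q - 1) +
            (y + algebraMap K R a) ^ (q - 1) * (y + algebraMap K R a) := by
          rw [hfrob]; ring
      _ = (y ^ q - y) * (y + algebraMap K R a) ^ (q - 1) + y ^ q + algebraMap K R a := by
          rw [pow_sub_one_mul (by lia), hfrob, add_assoc]
  have hsum : ∑ a : K, a = 0 := by
    simpa using sum_pow_lt_card_sub_one K 1 (by lia)
  have hcard : (q : R) = 0 := by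
    rw [← map_natCast (algebraMap K R), cast_card_eq_zero, map_zero]
  simp_rw [hsplit, Finset.sum_add_distrib, ← Finset.mul_sum]
  rw [← map_sum (algebraMap K R), hsum, sum_add_algebraMap_pow_card_sub_one, Finset.sum_const,
    Finset.card_univ, ← hq, nsmul_eq_mul, hcard, map_zero]
  ring

theorem sum_range_nsmul_zmod {p : ℕ} [Fact p.Prime] {M : Type*} [AddCommMonoid M] {c : ZMod p}
    (hc : c ≠ 0) (f : ZMod p → M) : ∑ j ∈ Finset.range p, f (j • c) = ∑ a, f a := by
  rw [← Equiv.sum_comp (Equiv.mulRight₀ c hc) f]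
  exact Finset.sum_bij' (fun j _ => (j : ZMod p)) (fun a _ => a.val) (by simp)
    (fun a _ => by simpa using a.val_lt) (fun j hj => ZMod.val_cast_of_lt (by simpa using hj))
    (by simp) (by simp)

end PowerSums

section ArtinSchreier

variable {p : ℕ} [Fact p.Prime] {L : Type*} [Field L] [Algebra (ZMod p) L] {y g : L}

local notation "φ" => frobeniusAlgHom (ZMod p) L

theorem minimalPeriod_artinSchreier (hy : y ^ p - y = g) (hg : orbitSum φ g ≠ 0) :
    minimalPeriod φ y = minimalPeriod φ g * p := by
  have : CharP L p := charP_of_injective_algebraMap' (ZMod p) p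
  rw [minimalPeriod_eq_mul_addOrderOf (a := g) (by simpa [ZMod.card] using hy),
    addOrderOf_eq_prime (p := p) (by simp) hg]

/-- The sum on the left is the trace of `y ^ (2 * p - 1)` from `F_p(y)` to `F_p(g)`. -/
theorem birkhoffSum_artinSchreier_pow (hp : p ≠ 2) (hy : y ^ p - y = g) (hg : orbitSum φ g ≠ 0) :
    birkhoffSum φ^[minimalPeriod φ g] id p (y ^ (2 * p - 1)) = -g := by
  obtain ⟨c, hc⟩ := mem_bot.1 (mem_bot_of_isFixedPt_frobeniusAlgHom (ZMod p)
    (isFixedPt_orbitSum φ g))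
  have hc0 : c ≠ 0 := by
    rintro rfl
    exact hg (by rw [← hc, map_zero])
  have hp2 : 2 < Fintype.card (ZMod p) := by
    rw [ZMod.card]
    exact lt_of_le_of_ne (Fact.out : p.Prime).two_le hp.symm
  calc birkhoffSum φ^[minimalPeriod φ g] id p (y ^ (2 * p - 1))
      = ∑ j ∈ Finset.range p, (y + algebraMap (ZMod p) L (j • c)) ^ (2 * p - 1) := by
        refine Finset.sum_congr rfl fun j _ => ?_
        rw [id, ← iterate_mul, iterate_map_pow,
          iterate_minimalPeriod_mul_eq_add_nsmul (by simpa [ZMod.card] using hy), ← hc, map_nsmul]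
    _ = ∑ a, (y + algebraMap (ZMod p) L a) ^ (2 * p - 1) :=
        sum_range_nsmul_zmod hc0 fun a => (y + algebraMap (ZMod p) L a) ^ (2 * p - 1)
    _ = y - y ^ p := by
        simpa only [ZMod.card] using sum_add_algebraMap_pow_two_mul_card_sub_one (ZMod p) hp2 y
    _ = -g := by rw [← hy, neg_sub]

theorem minimalPeriod_artinSchreier_pow (hp : p ≠ 2) (hy : y ^ p - y = g)
    (hg : orbitSum φ g ≠ 0) :
    minimalPeriod φ (y ^ (2 * p - 1)) = minimalPeriod φ g * p := by
  have : CharP L p := charP_of_injective_algebraMap' (ZMod p) p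
  have hg0 : -g ≠ 0 := by
    rw [neg_ne_zero]
    rintro rfl
    exact hg (by simp [orbitSum, birkhoffSum])
  have hper : IsPeriodicPt φ (minimalPeriod φ g * p) (y ^ (2 * p - 1)) := by
    rw [IsPeriodicPt, IsFixedPt, iterate_map_pow, ← minimalPeriod_artinSchreier hy hg,
      iterate_minimalPeriod]
  have htrace := birkhoffSum_artinSchreier_pow hp hy hg
  rw [← minimalPeriod_neg φ g] at hper htrace ⊢
  exact minimalPeriod_eq_mul_prime Fact.out (by simp) hg0 hper htrace

theorem orbitSum_artinSchreier_pow (hp : p ≠ 2) (hy : y ^ p - y = g) (hg : orbitSum φ g ≠ 0) :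
    orbitSum φ (y ^ (2 * p - 1)) = -orbitSum φ g := by
  have hmin := minimalPeriod_artinSchreier_pow hp hy hg
  have htrace := birkhoffSum_artinSchreier_pow hp hy hg
  rw [← minimalPeriod_neg φ g] at hmin htrace
  rw [orbitSum_eq_of_birkhoffSum_iterate hmin htrace, orbitSum_neg]

end ArtinSchreier

/-- The elements `γ_0 = x_0` and `γ_i = x_i ^ (2p - 1)`, `i ≥ 1`, so that the Cantor tower is given
by the equations `x_{i+1} ^ p - x_{i+1} = γ_i` for all `i ≥ 0`. -/
def cantorGamma {M : Type*} [Monoid M] (p : ℕ) (x : ℕ → M) : ℕ → M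
  | 0 => x 0
  | i + 1 => x (i + 1) ^ (2 * p - 1)

/-- The defining equations of the Cantor tower, together with the condition that the trace of `x_0`
from `F_p(x_0)` to `F_p` is nonzero; the latter is phrased with `orbitSum`, and contains the
algebraicity of `x_0`. -/
structure IsCantorTower (p : ℕ) [Fact p.Prime] {L : Type*} [Field L] [Algebra (ZMod p) L]
    (x : ℕ → L) : Prop where
  artinSchreier (i : ℕ) : x (i + 1) ^ p - x (i + 1) = cantorGamma p x i
  orbitSum_ne_zero : orbitSum (frobeniusAlgHom (ZMod p) L) (x 0) ≠ 0

section CantorTower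

variable {p : ℕ} [Fact p.Prime] {L : Type*} [Field L] [Algebra (ZMod p) L] {x : ℕ → L}

local notation "φ" => frobeniusAlgHom (ZMod p) L

theorem cantorGamma_mem_adjoin_simple (i : ℕ) : cantorGamma p x i ∈ (ZMod p)⟮x i⟯ := by
  cases i with
  | zero => exact mem_adjoin_simple_self _ _
  | succ i => exact pow_mem (mem_adjoin_simple_self _ _) _

theorem orbitSum_cantorGamma_ne_zero (hp : p ≠ 2) (hx : IsCantorTower p x) (i : ℕ) :
    orbitSum φ (cantorGamma p x i) ≠ 0 := by
  induction i with
  | zero => exact hx.orbitSum_ne_zero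
  | succ i ih =>
    rwa [cantorGamma, orbitSum_artinSchreier_pow hp (hx.artinSchreier i) ih, neg_ne_zero]

theorem minimalPeriod_cantorGamma (hp : p ≠ 2) (hx : IsCantorTower p x) (i : ℕ) :
    minimalPeriod φ (cantorGamma p x i) = p ^ i * minimalPeriod φ (x 0) := by
  induction i with
  | zero => rw [cantorGamma, pow_zero, one_mul]
  | succ i ih =>
    rw [cantorGamma, minimalPeriod_artinSchreier_pow hp (hx.artinSchreier i)
      (orbitSum_cantorGamma_ne_zero hp hx i), ih]
    ring

theorem minimalPeriod_cantorTower (hp : p ≠ 2) (hx : IsCantorTower p x) (i : ℕ) :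
    minimalPeriod φ (x i) = p ^ i * minimalPeriod φ (x 0) := by
  cases i with
  | zero => rw [pow_zero, one_mul]
  | succ i =>
    rw [minimalPeriod_artinSchreier (hx.artinSchreier i) (orbitSum_cantorGamma_ne_zero hp hx i),
      minimalPeriod_cantorGamma hp hx]
    ring

theorem adjoin_cantorGamma (hp : p ≠ 2) (hx : IsCantorTower p x) (i : ℕ) :
    (ZMod p)⟮cantorGamma p x i⟯ = (ZMod p)⟮x i⟯ := by
  refine adjoin_simple_eq_of_minimalPeriod_eq (ZMod p)
    (isIntegral_of_orbitSum_ne_zero _ (orbitSum_cantorGamma_ne_zero hp hx i))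
    (cantorGamma_mem_adjoin_simple i) ?_
  rw [minimalPeriod_cantorGamma hp hx, minimalPeriod_cantorTower hp hx i]

theorem monotone_adjoin_cantorTower (hp : p ≠ 2) (hx : IsCantorTower p x) :
    Monotone fun i => (ZMod p)⟮x i⟯ := by
  refine monotone_nat_of_le_succ fun i => ?_
  rw [← adjoin_cantorGamma hp hx i, adjoin_simple_le_iff, ← hx.artinSchreier i]
  have hmem := mem_adjoin_simple_self (ZMod p) (x (i + 1))
  exact sub_mem (pow_mem hmem p) hmem

theorem adjoin_simple_cantorTower (hp : p ≠ 2) (hx : IsCantorTower p x) (i : ℕ) :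
    (ZMod p)⟮x i⟯ = adjoin (ZMod p) (x '' Set.Iic i) := by
  apply le_antisymm
  · exact adjoin.mono _ _ _ (Set.singleton_subset_iff.2 (Set.mem_image_of_mem x Set.self_mem_Iic))
  · rw [adjoin_le_iff]
    rintro _ ⟨j, hj, rfl⟩
    exact monotone_adjoin_cantorTower hp hx hj (mem_adjoin_simple_self _ _)

end CantorTower

theorem cantor_tower_is_primitive_general
    (p d : ℕ) [Fact p.Prime] (hodd : p ≠ 2)
    (Ω : Type*) [Field Ω] [Algebra (ZMod p) Ω]
    (x : ℕ → Ω)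
    (U : ℕ → IntermediateField (ZMod p) Ω)
    (hU : ∀ i, U i = IntermediateField.adjoin (ZMod p) (x '' Set.Iic i))
    (hdeg : Module.finrank (ZMod p) ↥(U 0) = d)
    (hx0 : x 0 ∈ U 0)
    (htr0 : Algebra.trace (ZMod p) ↥(U 0) ⟨x 0, hx0⟩ ≠ 0)
    (hx1 : x 1 ^ p - x 1 = x 0)
    (hxi : ∀ i, 1 ≤ i → x (i + 1) ^ p - x (i + 1) = x i ^ (2 * p - 1)) :
    ∀ i, (ZMod p)⟮x i⟯ = U i ∧
      Module.finrank (ZMod p) ↥((ZMod p)⟮x i⟯) = p ^ i * d := by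
  have hU0 : U 0 = (ZMod p)⟮x 0⟯ := by
    rw [hU, ← Nat.bot_eq_zero, Set.Iic_bot, Set.image_singleton]
  have hx : IsCantorTower p x := by
    refine ⟨fun i => ?_, ?_⟩
    · cases i with
      | zero => exact hx1
      | succ i => exact hxi (i + 1) i.succ_pos
    · rw [← algebraMap_trace_gen_eq_orbitSum, map_ne_zero]
      revert htr0 hx0
      rw [hU0]
      exact fun _ htr => htr
  refine fun i => ⟨by rw [hU, adjoin_simple_cantorTower hodd hx], ?_⟩
  rw [← hdeg, hU0, ← minimalPeriod_frobeniusAlgHom, ← minimalPeriod_frobeniusAlgHom,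
    minimalPeriod_cantorTower hodd hx]

/-- In the Cantor tower over `F_p` with `p` odd, for every `i ≥ 0` the
element `x_i` generates `U_i` over `F_p`: `F_p(x_i) = U_i = F_p(x_0, …, x_i)`, and in
particular `[F_p(x_i) : F_p] = p^i · d`. -/
theorem cantor_tower_is_primitive
    (p d : ℕ) [Fact p.Prime] (hodd : p ≠ 2) (hd : 1 ≤ d)
    (Ω : Type*) [Field Ω] [Algebra (ZMod p) Ω] [IsAlgClosure (ZMod p) Ω]
    (x : ℕ → Ω)
    (U : ℕ → IntermediateField (ZMod p) Ω)
    (hU : ∀ i, U i = IntermediateField.adjoin (ZMod p) (x '' Set.Iic i))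
    (hdeg : Module.finrank (ZMod p) ↥(U 0) = d)
    (hx0 : x 0 ∈ U 0)
    (htr0 : Algebra.trace (ZMod p) ↥(U 0) ⟨x 0, hx0⟩ ≠ 0)
    (hx1 : x 1 ^ p - x 1 = x 0)
    (hxi : ∀ i, 1 ≤ i → x (i + 1) ^ p - x (i + 1) = x i ^ (2 * p - 1)) :
    ∀ i, (ZMod p)⟮x i⟯ = U i ∧
      Module.finrank (ZMod p) ↥((ZMod p)⟮x i⟯) = p ^ i * d :=
  cantor_tower_is_primitive_general p d hodd Ω x U hU hdeg hx0 htr0 hx1 hxi
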